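/- arXiv:1203.6768 — 3 statements merged into one kernel-verified Lean document; each statement's English description precedes it below -/
import Mathlib

section
/- Each λ∈ba(𝒜) decomposes uniquely as λ=λ_c+λ_d where λ_c is strongly continuous and λ_d is strongly discontinuous. Moreover λ_c coincides with the strongly continuous part λ₀ of the Sobczyk–Hammer decomposition λ=λ₀+Σ_n a_n λ_n (λ₀ strongly continuous; the λ_n distinct and {0,1}-valued; a_n≠0; Σ_n|a_n|<∞). -/
open Set Filter Topology

namespace FA

/-- An algebra of subsets of `Ω`. -/
structure SetAlg (Ω : Type*) where
  sets : Set (Set Ω)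
  empty_mem : ∅ ∈ sets
  compl_mem : ∀ ⦃A⦄, A ∈ sets → Aᶜ ∈ sets
  union_mem : ∀ ⦃A B⦄, A ∈ sets → B ∈ sets → A ∪ B ∈ sets

/-- A bounded, finitely additive real-valued set function on the algebra `𝒜`,
i.e. an element of `ba(𝒜)`. -/
structure BAMeasure {Ω : Type*} (𝒜 : SetAlg Ω) where
  toFun : Set Ω → ℝ
  map_empty : toFun ∅ = 0
  additive : ∀ ⦃A B : Set Ω⦄, A ∈ 𝒜.sets → B ∈ 𝒜.sets → Disjoint A B →
      toFun (A ∪ B) = toFun A + toFun B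
  bounded : ∃ M : ℝ, ∀ A ∈ 𝒜.sets, |toFun A| ≤ M

variable {Ω : Type*} {𝒜 : SetAlg Ω}

/-- Total variation `|λ|(A) = λ⁺(A) + λ⁻(A)`. -/
noncomputable def var (lam : BAMeasure 𝒜) (A : Set Ω) : ℝ :=
  sSup {x | ∃ B ∈ 𝒜.sets, B ⊆ A ∧ x = lam.toFun B} +
  sSup {x | ∃ B ∈ 𝒜.sets, B ⊆ A ∧ x = -lam.toFun B}

/-- The outer measure `|λ|*(B) = inf {|λ|(A) : A ∈ 𝒜, B ⊆ A}`. -/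
noncomputable def outer (lam : BAMeasure 𝒜) (B : Set Ω) : ℝ :=
  sInf {x | ∃ A ∈ 𝒜.sets, B ⊆ A ∧ x = var lam A}

/-- `𝒜`-simple functions. -/
def IsSimple (𝒜 : SetAlg Ω) (f : Ω → ℝ) : Prop :=
  (Set.range f).Finite ∧ ∀ r : ℝ, f ⁻¹' {r} ∈ 𝒜.sets

/-- `λ`-convergence: `(f n)` converges to `g` in `λ`-measure. -/
def LConv (lam : BAMeasure 𝒜) (f : ℕ → Ω → ℝ) (g : Ω → ℝ) : Prop :=
  ∀ c > (0:ℝ), Tendsto (fun n => outer lam {ω | c < |f n ω - g ω|}) atTop (𝓝 0)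

/-- `λ`-Cauchy sequences. -/
def LCauchy (lam : BAMeasure 𝒜) (f : ℕ → Ω → ℝ) : Prop :=
  ∀ c > (0:ℝ), ∀ ε > (0:ℝ), ∃ N : ℕ, ∀ p q : ℕ,
    outer lam {ω | c < |f (N + p) ω - f (N + q) ω|} < ε

/-- `L⁰(λ)`: `λ`-limits of sequences of `𝒜`-simple functions. -/
def L0 (lam : BAMeasure 𝒜) : Set (Ω → ℝ) :=
  {f | ∃ s : ℕ → Ω → ℝ, (∀ n, IsSimple 𝒜 (s n)) ∧ LConv lam s f}

/-- The metric of `L⁰(λ)`: `d(f,g) = inf {c + |λ|*(|f-g| ≥ c) : c > 0}`. -/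
noncomputable def dL0 (lam : BAMeasure 𝒜) (f g : Ω → ℝ) : ℝ :=
  sInf {x | ∃ c > (0:ℝ), x = c + outer lam {ω | c ≤ |f ω - g ω|}}

/-- A set `K` is bounded in `L⁰(λ)` if `lim_{c→∞} sup_{f∈K} |λ|*(|f|>c) = 0`. -/
def BddL0 (lam : BAMeasure 𝒜) (K : Set (Ω → ℝ)) : Prop :=
  ∀ ε > (0:ℝ), ∃ c₀ : ℝ, ∀ c ≥ c₀, ∀ f ∈ K, outer lam {ω | c < |f ω|} < ε

/-- The nonnegative elements of `L⁰(λ)`. -/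
def L0pos (lam : BAMeasure 𝒜) : Set (Ω → ℝ) := {f ∈ L0 lam | ∀ ω, 0 ≤ f ω}

/-- The elementary integral of a simple function with respect to a set function. -/
noncomputable def simpleIntegral (m : Set Ω → ℝ) (f : Ω → ℝ) : ℝ :=
  ∑ᶠ r : ℝ, r * m (f ⁻¹' {r})

/-- Dunford–Schwartz integrability: there is a sequence of simple functions converging to `f`
in `λ`-measure which is Cauchy in mean. -/
def MemL1 (lam : BAMeasure 𝒜) (f : Ω → ℝ) : Prop :=
  ∃ s : ℕ → Ω → ℝ, (∀ n, IsSimple 𝒜 (s n)) ∧ LConv lam s f ∧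
    ∀ ε > (0:ℝ), ∃ N : ℕ, ∀ m ≥ N, ∀ n ≥ N,
      simpleIntegral (var lam) (fun ω => |s m ω - s n ω|) < ε

/-- `L¹(λ)`. -/
def L1 (lam : BAMeasure 𝒜) : Set (Ω → ℝ) := {f | MemL1 lam f}

open scoped Classical in
/-- The Dunford–Schwartz integral `∫ f dλ`. -/
noncomputable def integral (lam : BAMeasure 𝒜) (f : Ω → ℝ) : ℝ :=
  if h : MemL1 lam f then
    limUnder atTop (fun n => simpleIntegral lam.toFun (h.choose n))
  else 0

open scoped Classical in
/-- The `L¹(λ)` seminorm `∫ |f| d|λ|`. -/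
noncomputable def l1Norm (lam : BAMeasure 𝒜) (f : Ω → ℝ) : ℝ :=
  if h : MemL1 lam f then
    limUnder atTop (fun n => simpleIntegral (var lam) (fun ω => |h.choose n ω|))
  else 0

/-- A set is bounded in `L¹(μ)` if the integrals `∫|f| d|μ|` are uniformly bounded. -/
def BddL1 (mu : BAMeasure 𝒜) (K : Set (Ω → ℝ)) : Prop :=
  ∃ M : ℝ, ∀ f ∈ K, l1Norm mu f ≤ M

/-- Finitely additive probability measures. -/
def IsFAProb (mu : BAMeasure 𝒜) : Prop :=
  mu.toFun Set.univ = 1 ∧ ∀ A ∈ 𝒜.sets, 0 ≤ mu.toFun A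

/-- `μ ∈ 𝔓_*(λ)`: a finitely additive probability with `|μ| ≤ c |λ|` and the same null
sets as `λ`. -/
def PStar (lam mu : BAMeasure 𝒜) : Prop :=
  IsFAProb mu ∧ (∃ c : ℝ, 0 ≤ c ∧ ∀ A ∈ 𝒜.sets, var mu A ≤ c * var lam A) ∧
  ∀ A ∈ 𝒜.sets, (mu.toFun A = 0 ↔ var lam A = 0)

/-- `μ ∈ 𝔓_*(λ; K)`. -/
def PStarWith (lam : BAMeasure 𝒜) (K : Set (Ω → ℝ)) (mu : BAMeasure 𝒜) : Prop :=
  PStar lam mu ∧ K ⊆ L1 mu ∧ BddL1 mu K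

/-- `f` is a `λ`-a.s. lower bound of `K`. -/
def ASLowerBound (lam : BAMeasure 𝒜) (f : Ω → ℝ) (K : Set (Ω → ℝ)) : Prop :=
  ∀ c > (0:ℝ), ∀ k ∈ K, outer lam {ω | k ω < f ω - c} = 0

/-- Absolute continuity `μ ≪ λ` for bounded finitely additive set functions. -/
def AbsCont (mu lam : BAMeasure 𝒜) : Prop :=
  ∀ ε > (0:ℝ), ∃ δ > (0:ℝ), ∀ A ∈ 𝒜.sets, var lam A < δ → var mu A < ε

/-- `λ ∈ ba₀(𝒜)`: the range of `λ` is finite. -/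
def FiniteRange (lam : BAMeasure 𝒜) : Prop := (lam.toFun '' 𝒜.sets).Finite

/-- `μ ∈ ba₀(λ)`. -/
def BA0rel (lam mu : BAMeasure 𝒜) : Prop := FiniteRange mu ∧ AbsCont mu lam

/-- Strong continuity: arbitrarily fine finite partitions. -/
def StronglyContinuous (lam : BAMeasure 𝒜) : Prop :=
  ∀ ε > (0:ℝ), ∃ (N : ℕ) (A : Fin N → Set Ω), (∀ n, A n ∈ 𝒜.sets) ∧
    Pairwise (Function.onFun Disjoint A) ∧ (⋃ n, A n) = Set.univ ∧
    ∀ n, var lam (A n) < ε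

/-- Orthogonality of bounded finitely additive set functions. -/
def Orthogonal (mu nu : BAMeasure 𝒜) : Prop :=
  ∀ ε > (0:ℝ), ∃ A ∈ 𝒜.sets, var mu A < ε ∧ var nu Aᶜ < ε

/-- Strong discontinuity: orthogonal to every strongly continuous element of `ba(𝒜)`. -/
def StronglyDiscontinuous (mu : BAMeasure 𝒜) : Prop :=
  ∀ nu : BAMeasure 𝒜, StronglyContinuous nu → Orthogonal mu nu

/-- Countable additivity of `λ` on the algebra `𝒜`. -/
def CountablyAdditive (lam : BAMeasure 𝒜) : Prop :=
  ∀ A : ℕ → Set Ω, (∀ n, A n ∈ 𝒜.sets) → Pairwise (Function.onFun Disjoint A) →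
    (⋃ n, A n) ∈ 𝒜.sets → HasSum (fun n => lam.toFun (A n)) (lam.toFun (⋃ n, A n))

/-- `𝒜` is a σ-algebra. -/
def IsSigmaAlg (𝒜 : SetAlg Ω) : Prop :=
  ∀ A : ℕ → Set Ω, (∀ n, A n ∈ 𝒜.sets) → (⋃ n, A n) ∈ 𝒜.sets

/-- Linearity of a functional on `L⁰(λ)`. -/
def LinearOnL0 (lam : BAMeasure 𝒜) (φ : (Ω → ℝ) → ℝ) : Prop :=
  (∀ f ∈ L0 lam, ∀ g ∈ L0 lam, φ (f + g) = φ f + φ g) ∧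
  (∀ a : ℝ, ∀ f ∈ L0 lam, φ (a • f) = a * φ f)

/-- Continuity of a functional on `L⁰(λ)` with respect to the metric `d`. -/
def ContinuousOnL0 (lam : BAMeasure 𝒜) (φ : (Ω → ℝ) → ℝ) : Prop :=
  ∀ f ∈ L0 lam, ∀ ε > (0:ℝ), ∃ δ > (0:ℝ), ∀ g ∈ L0 lam, dL0 lam g f < δ → |φ g - φ f| < ε



section Helpers


lemma SetAlg.univ_mem (𝒜 : SetAlg Ω) : (Set.univ : Set Ω) ∈ 𝒜.sets := by
  have := 𝒜.compl_mem 𝒜.empty_mem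
  simpa using this

lemma SetAlg.inter_mem {A B : Set Ω} (hA : A ∈ 𝒜.sets) (hB : B ∈ 𝒜.sets) :
    A ∩ B ∈ 𝒜.sets := by
  have := 𝒜.compl_mem (𝒜.union_mem (𝒜.compl_mem hA) (𝒜.compl_mem hB))
  simpa [Set.compl_union] using this

lemma SetAlg.diff_mem {A B : Set Ω} (hA : A ∈ 𝒜.sets) (hB : B ∈ 𝒜.sets) :
    A \ B ∈ 𝒜.sets := SetAlg.inter_mem hA (𝒜.compl_mem hB)

lemma SetAlg.biUnion_mem {ι : Type*} (A : ι → Set Ω) (s : Finset ι)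
    (hA : ∀ i ∈ s, A i ∈ 𝒜.sets) : (⋃ i ∈ s, A i) ∈ 𝒜.sets := by
  classical
  induction s using Finset.induction_on with
  | empty => simpa using 𝒜.empty_mem
  | insert i s hi ih =>
    rw [Finset.set_biUnion_insert]
    exact 𝒜.union_mem (hA i (by simp)) (ih fun j hj => hA j (by simp [hj]))

lemma split (μ : BAMeasure 𝒜) {A B : Set Ω} (hA : A ∈ 𝒜.sets) (hB : B ∈ 𝒜.sets) :
    μ.toFun A = μ.toFun (A ∩ B) + μ.toFun (A \ B) := by
  rw [← μ.additive (SetAlg.inter_mem hA hB) (SetAlg.diff_mem hA hB)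
    (Set.disjoint_sdiff_inter.symm), Set.inter_union_diff]

lemma toFun_diff (μ : BAMeasure 𝒜) {A B : Set Ω} (hA : A ∈ 𝒜.sets) (hB : B ∈ 𝒜.sets)
    (h : B ⊆ A) : μ.toFun (A \ B) = μ.toFun A - μ.toFun B := by
  have := split μ hA hB
  rw [Set.inter_eq_self_of_subset_right h] at this
  linarith

/-- Sum. -/
def addM (μ ν : BAMeasure 𝒜) : BAMeasure 𝒜 where
  toFun A := μ.toFun A + ν.toFun A
  map_empty := by simp [μ.map_empty, ν.map_empty]
  additive A B hA hB h := by
    rw [μ.additive hA hB h, ν.additive hA hB h]; ring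
  bounded := by
    obtain ⟨M, hM⟩ := μ.bounded
    obtain ⟨N, hN⟩ := ν.bounded
    exact ⟨M + N, fun A hA => (abs_add_le _ _).trans (add_le_add (hM A hA) (hN A hA))⟩

/-- Negation. -/
def negM (μ : BAMeasure 𝒜) : BAMeasure 𝒜 where
  toFun A := - μ.toFun A
  map_empty := by simp [μ.map_empty]
  additive A B hA hB h := by
    rw [μ.additive hA hB h]; ring
  bounded := by
    obtain ⟨M, hM⟩ := μ.bounded
    exact ⟨M, fun A hA => by rw [abs_neg]; exact hM A hA⟩

lemma le_P (μ : BAMeasure 𝒜) {A B : Set Ω} (hB : B ∈ 𝒜.sets) (h : B ⊆ A) :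
    μ.toFun B ≤ sSup {x | ∃ B ∈ 𝒜.sets, B ⊆ A ∧ x = μ.toFun B} := by
  obtain ⟨M, hM⟩ := μ.bounded
  refine le_csSup ⟨M, ?_⟩ ⟨B, hB, h, rfl⟩
  rintro x ⟨C, hC, -, rfl⟩
  exact (le_abs_self _).trans (hM C hC)

lemma P_le (μ : BAMeasure 𝒜) {A : Set Ω} {x : ℝ}
    (h : ∀ B ∈ 𝒜.sets, B ⊆ A → μ.toFun B ≤ x) :
    sSup {x | ∃ B ∈ 𝒜.sets, B ⊆ A ∧ x = μ.toFun B} ≤ x := by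
  refine csSup_le ⟨_, ∅, 𝒜.empty_mem, Set.empty_subset _, rfl⟩ ?_
  rintro y ⟨C, hC, hCA, rfl⟩
  exact h C hC hCA

/-- Positive part. -/
noncomputable def posM (μ : BAMeasure 𝒜) : BAMeasure 𝒜 where
  toFun A := sSup {x | ∃ B ∈ 𝒜.sets, B ⊆ A ∧ x = μ.toFun B}
  map_empty := by
    apply le_antisymm
    · apply P_le
      intro B _ h
      rw [Set.subset_empty_iff.1 h, μ.map_empty]
    · have := le_P μ (A := ∅) 𝒜.empty_mem (Set.empty_subset _)
      rwa [μ.map_empty] at this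
  additive A B hA hB h := by
    apply le_antisymm
    · apply P_le
      intro C hC hCA
      rw [split μ hC hA]
      refine add_le_add (le_P μ (SetAlg.inter_mem hC hA) Set.inter_subset_right)
        (le_P μ (SetAlg.diff_mem hC hA) ?_)
      rw [Set.diff_subset_iff]; exact hCA
    · rw [← le_sub_iff_add_le]
      apply P_le
      intro C hC hCA
      rw [le_sub_comm]
      apply P_le
      intro D hD hDB
      have h1 := le_P μ (A := A ∪ B) (𝒜.union_mem hC hD) (Set.union_subset_union hCA hDB)
      rw [μ.additive hC hD (h.mono hCA hDB)] at h1
      linarith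
  bounded := by
    obtain ⟨M, hM⟩ := μ.bounded
    refine ⟨M, fun A hA => abs_le.2 ⟨?_, ?_⟩⟩
    · have := le_P μ hA (subset_refl A)
      exact (neg_le_of_abs_le (hM A hA)).trans this
    · exact P_le μ fun B hB _ => (le_abs_self _).trans (hM B hB)

lemma le_posM (μ : BAMeasure 𝒜) {A B : Set Ω} (hB : B ∈ 𝒜.sets) (h : B ⊆ A) :
    μ.toFun B ≤ (posM μ).toFun A := le_P μ hB h

lemma posM_le (μ : BAMeasure 𝒜) {A : Set Ω} {x : ℝ}
    (h : ∀ B ∈ 𝒜.sets, B ⊆ A → μ.toFun B ≤ x) : (posM μ).toFun A ≤ x := P_le μ h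

/-- Nonnegativity. -/
def NN (μ : BAMeasure 𝒜) : Prop := ∀ A ∈ 𝒜.sets, 0 ≤ μ.toFun A

lemma posM_nonneg (μ : BAMeasure 𝒜) (A : Set Ω) : 0 ≤ (posM μ).toFun A := by
  have := le_posM μ (A := A) 𝒜.empty_mem (Set.empty_subset _)
  rwa [μ.map_empty] at this

lemma NN.mono {μ : BAMeasure 𝒜} (h : NN μ) {A B : Set Ω} (hA : A ∈ 𝒜.sets)
    (hB : B ∈ 𝒜.sets) (hAB : A ⊆ B) : μ.toFun A ≤ μ.toFun B := by
  have h1 := toFun_diff μ hB hA hAB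
  have h2 := h _ (SetAlg.diff_mem hB hA)
  linarith

/-- Total variation as an element of ba. -/
noncomputable def varM (μ : BAMeasure 𝒜) : BAMeasure 𝒜 := addM (posM μ) (posM (negM μ))

lemma varM_apply (μ : BAMeasure 𝒜) (A : Set Ω) : (varM μ).toFun A = var μ A := rfl

lemma var_eq (μ : BAMeasure 𝒜) (A : Set Ω) :
    var μ A = (posM μ).toFun A + (posM (negM μ)).toFun A := rfl

lemma var_nonneg (μ : BAMeasure 𝒜) (A : Set Ω) : 0 ≤ var μ A :=
  add_nonneg (posM_nonneg μ A) (posM_nonneg (negM μ) A)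

lemma NN_varM (μ : BAMeasure 𝒜) : NN (varM μ) := fun A _ => var_nonneg μ A

lemma abs_le_var (μ : BAMeasure 𝒜) {A : Set Ω} (hA : A ∈ 𝒜.sets) : |μ.toFun A| ≤ var μ A := by
  have h1 := le_posM μ hA (subset_refl A)
  have h2 : -μ.toFun A ≤ _ := le_posM (negM μ) hA (subset_refl A)
  have h3 := posM_nonneg μ A
  have h4 := posM_nonneg (negM μ) A
  rw [var_eq, abs_le]
  constructor <;> linarith

lemma var_le_of_abs_le {μ ν : BAMeasure 𝒜} (h : ∀ A ∈ 𝒜.sets, |μ.toFun A| ≤ ν.toFun A)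
    {A : Set Ω} (hA : A ∈ 𝒜.sets) : var μ A ≤ ν.toFun A := by
  have hν : NN ν := fun A hA => (abs_nonneg _).trans (h A hA)
  rw [var_eq, ← le_sub_iff_add_le]
  apply posM_le
  intro B hB hBA
  rw [le_sub_comm]
  apply posM_le
  intro C hC hCA
  change - μ.toFun C ≤ _
  have h1 := split μ hB hC
  have h2 := split μ hC hB
  rw [Set.inter_comm] at h2
  have h3 := (abs_le.1 (h _ (SetAlg.diff_mem hB hC))).2
  have h4 := (abs_le.1 (h _ (SetAlg.diff_mem hC hB))).1
  have hd : Disjoint (B \ C) (C \ B) := disjoint_sdiff_sdiff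
  have h5 := ν.additive (SetAlg.diff_mem hB hC) (SetAlg.diff_mem hC hB) hd
  have h6 := hν.mono (𝒜.union_mem (SetAlg.diff_mem hB hC) (SetAlg.diff_mem hC hB)) hA
    (Set.union_subset (Set.diff_subset.trans hBA) (Set.diff_subset.trans hCA))
  linarith

lemma var_of_NN {μ : BAMeasure 𝒜} (h : NN μ) {A : Set Ω} (hA : A ∈ 𝒜.sets) :
    var μ A = μ.toFun A :=
  le_antisymm (var_le_of_abs_le (fun B hB => (abs_of_nonneg (h B hB)).le) hA)
    ((le_abs_self _).trans (abs_le_var μ hA))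

lemma var_varM (μ : BAMeasure 𝒜) {A : Set Ω} (hA : A ∈ 𝒜.sets) :
    var (varM μ) A = var μ A := var_of_NN (NN_varM μ) hA

lemma var_mono (μ : BAMeasure 𝒜) {A B : Set Ω} (hA : A ∈ 𝒜.sets)
    (hB : B ∈ 𝒜.sets) (hAB : A ⊆ B) : var μ A ≤ var μ B := (NN_varM μ).mono hA hB hAB

lemma var_le_add {μ ν κ : BAMeasure 𝒜}
    (h : ∀ A ∈ 𝒜.sets, |κ.toFun A| ≤ var μ A + var ν A)
    {A : Set Ω} (hA : A ∈ 𝒜.sets) : var κ A ≤ var μ A + var ν A :=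
  var_le_of_abs_le (ν := addM (varM μ) (varM ν)) h hA

lemma NN.union_le {μ : BAMeasure 𝒜} (h : NN μ) {A B : Set Ω} (hA : A ∈ 𝒜.sets)
    (hB : B ∈ 𝒜.sets) : μ.toFun (A ∪ B) ≤ μ.toFun A + μ.toFun B := by
  have h1 := split μ (𝒜.union_mem hA hB) hA
  rw [Set.union_inter_cancel_left, Set.union_diff_left] at h1
  have := h.mono (SetAlg.diff_mem hB hA) hB Set.diff_subset
  linarith

lemma NN.biUnion_le {μ : BAMeasure 𝒜} (h : NN μ) {ι : Type*} (A : ι → Set Ω) (s : Finset ι)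
    (hA : ∀ i ∈ s, A i ∈ 𝒜.sets) : μ.toFun (⋃ i ∈ s, A i) ≤ ∑ i ∈ s, μ.toFun (A i) := by
  classical
  induction s using Finset.induction_on with
  | empty => simp [μ.map_empty]
  | insert i s hi ih =>
    rw [Finset.set_biUnion_insert, Finset.sum_insert hi]
    have h1 := ih fun j hj => hA j (by simp [hj])
    have h2 := h.union_le (hA i (by simp))
      (SetAlg.biUnion_mem A s fun j hj => hA j (by simp [hj]))
    linarith

lemma SC_of_le_add {μ ν κ : BAMeasure 𝒜} (hμ : StronglyContinuous μ)
    (hν : StronglyContinuous ν)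
    (h : ∀ A ∈ 𝒜.sets, |κ.toFun A| ≤ var μ A + var ν A) : StronglyContinuous κ := by
  intro ε hε
  obtain ⟨N, A, hA, hAd, hAu, hAe⟩ := hμ (ε / 2) (by linarith)
  obtain ⟨M, B, hB, hBd, hBu, hBe⟩ := hν (ε / 2) (by linarith)
  let e := (finProdFinEquiv (m := N) (n := M)).symm
  have hm : ∀ k, A (e k).1 ∩ B (e k).2 ∈ 𝒜.sets := fun k => SetAlg.inter_mem (hA _) (hB _)
  refine ⟨N * M, fun k => A (e k).1 ∩ B (e k).2, hm, ?_, ?_, ?_⟩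
  · intro k l hkl
    change Disjoint (A (e k).1 ∩ B (e k).2) (A (e l).1 ∩ B (e l).2)
    by_cases h1 : (e k).1 = (e l).1
    · have h2 : (e k).2 ≠ (e l).2 := fun h2 => hkl (e.injective (Prod.ext h1 h2))
      exact (hBd h2).mono Set.inter_subset_right Set.inter_subset_right
    · exact (hAd h1).mono Set.inter_subset_left Set.inter_subset_left
  · rw [Set.eq_univ_iff_forall] at hAu hBu ⊢
    intro x
    obtain ⟨i, hi⟩ := Set.mem_iUnion.1 (hAu x)
    obtain ⟨j, hj⟩ := Set.mem_iUnion.1 (hBu x)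
    refine Set.mem_iUnion.2 ⟨e.symm (i, j), ?_⟩
    simp only [Equiv.apply_symm_apply]
    exact ⟨hi, hj⟩
  · intro k
    have h1 := var_le_add h (hm k)
    have h2 := var_mono μ (hm k) (hA _) Set.inter_subset_left
    have h3 := var_mono ν (hm k) (hB _) Set.inter_subset_right
    have h4 := hAe (e k).1
    have h5 := hBe (e k).2
    linarith

lemma SC_sub {μ ν : BAMeasure 𝒜} (hμ : StronglyContinuous μ)
    (hν : StronglyContinuous ν) : StronglyContinuous (addM μ (negM ν)) := by
  refine SC_of_le_add hμ hν fun A hA => ?_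
  change |μ.toFun A + -ν.toFun A| ≤ _
  refine (abs_add_le _ _).trans ?_
  rw [abs_neg]
  exact add_le_add (abs_le_var μ hA) (abs_le_var ν hA)

lemma SD_of_le_add {μ ν κ : BAMeasure 𝒜} (hμ : StronglyDiscontinuous μ)
    (hν : StronglyDiscontinuous ν)
    (h : ∀ A ∈ 𝒜.sets, |κ.toFun A| ≤ var μ A + var ν A) : StronglyDiscontinuous κ := by
  intro τ hτ ε hε
  obtain ⟨A, hA, hA1, hA2⟩ := hμ τ hτ (ε / 2) (by linarith)
  obtain ⟨B, hB, hB1, hB2⟩ := hν τ hτ (ε / 2) (by linarith)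
  refine ⟨A ∩ B, SetAlg.inter_mem hA hB, ?_, ?_⟩
  · have h1 := var_le_add h (SetAlg.inter_mem hA hB)
    have h2 := var_mono μ (SetAlg.inter_mem hA hB) hA Set.inter_subset_left
    have h3 := var_mono ν (SetAlg.inter_mem hA hB) hB Set.inter_subset_right
    linarith
  · rw [Set.compl_inter]
    have h1 := (NN_varM τ).union_le (𝒜.compl_mem hA) (𝒜.compl_mem hB)
    simp only [varM_apply] at h1
    linarith

lemma eq_zero_of_SC_SD {μ : BAMeasure 𝒜} (hc : StronglyContinuous μ)
    (hd : StronglyDiscontinuous μ) {A : Set Ω} (hA : A ∈ 𝒜.sets) : μ.toFun A = 0 := by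
  have h0 : var μ Set.univ ≤ 0 := by
    refine le_of_forall_pos_le_add fun ε hε => ?_
    obtain ⟨B, hB, h1, h2⟩ := hd μ hc (ε / 2) (by linarith)
    have h3 := (NN_varM μ).union_le hB (𝒜.compl_mem hB)
    rw [Set.union_compl_self] at h3
    simp only [varM_apply] at h3
    linarith
  have h1 := abs_le_var μ hA
  have h2 := var_mono μ hA 𝒜.univ_mem (Set.subset_univ A)
  exact abs_nonpos_iff.1 (by linarith)

lemma uniq {l c d c' d' : BAMeasure 𝒜} (hc : StronglyContinuous c)
    (hd : StronglyDiscontinuous d) (hc' : StronglyContinuous c')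
    (hd' : StronglyDiscontinuous d')
    (h : ∀ A ∈ 𝒜.sets, l.toFun A = c.toFun A + d.toFun A)
    (h' : ∀ A ∈ 𝒜.sets, l.toFun A = c'.toFun A + d'.toFun A) {A : Set Ω} (hA : A ∈ 𝒜.sets) :
    c.toFun A = c'.toFun A := by
  have h1 := SC_sub hc hc'
  have h2 : StronglyDiscontinuous (addM c (negM c')) := by
    refine SD_of_le_add hd' hd fun B hB => ?_
    change |c.toFun B + -c'.toFun B| ≤ _
    have e : c.toFun B + -c'.toFun B = d'.toFun B - d.toFun B := by
      linarith [h B hB, h' B hB]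
    rw [e]
    exact (abs_sub _ _).trans (add_le_add (abs_le_var _ hB) (abs_le_var _ hB))
  have h3 : c.toFun A + -c'.toFun A = 0 := eq_zero_of_SC_SD h1 h2 hA
  linarith

lemma exists_cell {τ : BAMeasure 𝒜} (hτ : StronglyContinuous τ) {μ : BAMeasure 𝒜}
    (hμ : ∀ A ∈ 𝒜.sets, μ.toFun A = 0 ∨ μ.toFun A = 1) {δ : ℝ} (hδ : 0 < δ) :
    ∃ C ∈ 𝒜.sets, var τ C < δ ∧ ∀ B ∈ 𝒜.sets, Disjoint B C → μ.toFun B = 0 := by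
  have hn : NN μ := fun A hA => by rcases hμ A hA with h | h <;> rw [h]; norm_num
  obtain ⟨N, A, hA, -, hAu, hAe⟩ := hτ δ hδ
  by_cases h : ∀ i, μ.toFun (A i) = 0
  · refine ⟨∅, 𝒜.empty_mem, ?_, fun B hB _ => ?_⟩
    · rw [← varM_apply, (varM τ).map_empty]; exact hδ
    · have h1 := hn.biUnion_le A Finset.univ fun i _ => hA i
      simp only [Finset.mem_univ, Set.iUnion_true, h, Finset.sum_const_zero, hAu] at h1
      have h2 := hn.mono hB 𝒜.univ_mem (Set.subset_univ B)
      exact le_antisymm (h2.trans h1) (hn B hB)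
  · push Not at h
    obtain ⟨i, hi⟩ := h
    have hi1 := (hμ _ (hA i)).resolve_left hi
    refine ⟨A i, hA i, hAe i, fun B hB hd => ?_⟩
    have h1 := μ.additive hB (hA i) hd
    have h2 := hn B hB
    rcases hμ _ (𝒜.union_mem hB (hA i)) with h | h <;> linarith

lemma SD_of_hasSum {d : BAMeasure 𝒜} (a : ℕ → ℝ) (lams : ℕ → BAMeasure 𝒜)
    (h01 : ∀ n, ∀ A ∈ 𝒜.sets, (lams n).toFun A = 0 ∨ (lams n).toFun A = 1)
    (ha : Summable (fun n => |a n|))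
    (hs : ∀ A ∈ 𝒜.sets, HasSum (fun n => a n * (lams n).toFun A) (d.toFun A)) :
    StronglyDiscontinuous d := by
  intro τ hτ ε hε
  obtain ⟨N, hN⟩ := ((tendsto_sum_nat_add fun n => |a n|).eventually
    (gt_mem_nhds (show (0:ℝ) < ε / 3 by linarith))).exists
  have hδ : 0 < ε / (N + 1 : ℝ) := by positivity
  choose C hC hCe hC0 using fun n => exists_cell hτ (h01 n) hδ
  have hU : (⋃ n ∈ Finset.range N, C n) ∈ 𝒜.sets := SetAlg.biUnion_mem C _ fun n _ => hC n
  refine ⟨(⋃ n ∈ Finset.range N, C n)ᶜ, 𝒜.compl_mem hU, ?_, ?_⟩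
  · have key : ∀ B ∈ 𝒜.sets, B ⊆ (⋃ n ∈ Finset.range N, C n)ᶜ → |d.toFun B| ≤ ε / 3 := by
      intro B hB hBU
      have h0 : ∀ n < N, (lams n).toFun B = 0 := by
        intro n hn
        refine hC0 n B hB (Set.disjoint_left.2 fun x hx hxC => hBU hx ?_)
        exact Set.mem_biUnion (Finset.mem_coe.2 (Finset.mem_range.2 hn)) hxC
      have h1 := (hasSum_nat_add_iff' N).2 (hs B hB)
      rw [Finset.sum_eq_zero (fun n hn => by rw [h0 n (Finset.mem_range.1 hn), mul_zero]),
        sub_zero] at h1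
      have h2 := ((summable_nat_add_iff N).2 ha).hasSum
      have h3 := h1.norm_le_of_bounded h2 fun n => by
        rw [Real.norm_eq_abs, abs_mul]
        rcases h01 (n + N) B hB with h | h <;> simp [h]
      exact h3.trans hN.le
    have h1 : (posM d).toFun (⋃ n ∈ Finset.range N, C n)ᶜ ≤ ε / 3 :=
      posM_le _ fun B hB h => (le_abs_self _).trans (key B hB h)
    have h2 : (posM (negM d)).toFun (⋃ n ∈ Finset.range N, C n)ᶜ ≤ ε / 3 :=
      posM_le _ fun B hB h => (neg_le_abs _).trans (key B hB h)
    rw [var_eq]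
    linarith
  · rw [compl_compl]
    have h1 := (NN_varM τ).biUnion_le C (Finset.range N) fun n _ => hC n
    have h2 : ∑ n ∈ Finset.range N, (varM τ).toFun (C n) ≤
        ∑ n ∈ Finset.range N, ε / (N + 1 : ℝ) :=
      Finset.sum_le_sum fun n _ => (hCe n).le
    rw [Finset.sum_const, Finset.card_range, nsmul_eq_mul] at h2
    have h3 : (N : ℝ) * (ε / (N + 1 : ℝ)) < ε := by
      have : ((N : ℝ) + 1) * (ε / (N + 1 : ℝ)) = ε := by field_simp
      linarith
    exact (h1.trans h2).trans_lt h3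

/-- Strongly continuous minorants. -/
def Minor (L μ : BAMeasure 𝒜) : Prop :=
  StronglyContinuous μ ∧ NN μ ∧ ∀ A ∈ 𝒜.sets, μ.toFun A ≤ L.toFun A

lemma SC_of_NN_le {μ ν κ : BAMeasure 𝒜} (hμ : StronglyContinuous μ)
    (hν : StronglyContinuous ν) (hκ : NN κ)
    (h : ∀ A ∈ 𝒜.sets, κ.toFun A ≤ var μ A + var ν A) : StronglyContinuous κ :=
  SC_of_le_add hμ hν fun A hA => by rw [abs_of_nonneg (hκ A hA)]; exact h A hA

lemma Minor.sup {L μ ν : BAMeasure 𝒜} (hμ : Minor L μ) (hν : Minor L ν) :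
    ∃ κ, Minor L κ ∧ ∀ A ∈ 𝒜.sets, μ.toFun A ≤ κ.toFun A ∧ ν.toFun A ≤ κ.toFun A := by
  have hle : ∀ A ∈ 𝒜.sets, (posM (addM ν (negM μ))).toFun A ≤ ν.toFun A := by
    intro A hA
    refine posM_le _ fun B hB hBA => ?_
    change ν.toFun B + -μ.toFun B ≤ _
    linarith [hμ.2.1 B hB, hν.2.1.mono hB hA hBA]
  have hn : NN (addM μ (posM (addM ν (negM μ)))) := fun A hA =>
    add_nonneg (hμ.2.1 A hA) (posM_nonneg _ _)
  refine ⟨addM μ (posM (addM ν (negM μ))), ⟨?_, hn, ?_⟩, ?_⟩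
  · refine SC_of_NN_le hμ.1 hν.1 hn fun A hA => ?_
    rw [var_of_NN hμ.2.1 hA, var_of_NN hν.2.1 hA]
    exact add_le_add le_rfl (hle A hA)
  · intro A hA
    change μ.toFun A + (posM (addM ν (negM μ))).toFun A ≤ _
    rw [← le_sub_iff_add_le']
    refine posM_le _ fun B hB hBA => ?_
    change ν.toFun B + -μ.toFun B ≤ _
    have h1 := toFun_diff μ hA hB hBA
    have h2 := toFun_diff L hA hB hBA
    have h3 := hμ.2.2 _ (SetAlg.diff_mem hA hB)
    have h4 := hν.2.2 B hB
    linarith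
  · intro A hA
    have h1 : ν.toFun A + -μ.toFun A ≤ _ := le_posM (addM ν (negM μ)) hA (subset_refl A)
    have h2 := posM_nonneg (addM ν (negM μ)) A
    change _ ≤ μ.toFun A + (posM (addM ν (negM μ))).toFun A ∧
      _ ≤ μ.toFun A + (posM (addM ν (negM μ))).toFun A
    constructor <;> linarith

/-- Zero. -/
def zeroM (𝒜 : SetAlg Ω) : BAMeasure 𝒜 where
  toFun _ := 0
  map_empty := rfl
  additive _ _ _ _ _ := by simp
  bounded := ⟨0, fun _ _ => by simp⟩

lemma minor_zero {L : BAMeasure 𝒜} (hL : NN L) : Minor L (zeroM 𝒜) := by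
  have hn : NN (zeroM 𝒜) := fun A _ => le_rfl
  refine ⟨fun ε hε => ⟨1, fun _ => Set.univ, fun _ => 𝒜.univ_mem, ?_, ?_, fun _ => ?_⟩, hn, hL⟩
  · intro i j hij
    exact absurd (Subsingleton.elim i j) hij
  · exact Set.iUnion_const _
  · rw [var_of_NN hn 𝒜.univ_mem]; exact hε

lemma le_cont {L μ : BAMeasure 𝒜} (hμ : Minor L μ) {A : Set Ω} (hA : A ∈ 𝒜.sets) :
    μ.toFun A ≤ sSup {x | ∃ μ, Minor L μ ∧ x = μ.toFun A} := by
  refine le_csSup ⟨L.toFun A, ?_⟩ ⟨μ, hμ, rfl⟩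
  rintro x ⟨ν, hν, rfl⟩
  exact hν.2.2 A hA

lemma cont_le {L : BAMeasure 𝒜} (hL : NN L) {A : Set Ω} {x : ℝ}
    (h : ∀ μ, Minor L μ → μ.toFun A ≤ x) :
    sSup {x | ∃ μ, Minor L μ ∧ x = μ.toFun A} ≤ x := by
  refine csSup_le ⟨_, zeroM 𝒜, minor_zero hL, rfl⟩ ?_
  rintro y ⟨ν, hν, rfl⟩
  exact h ν hν

/-- The strongly continuous part of a nonnegative measure. -/
noncomputable def contM (L : BAMeasure 𝒜) (hL : NN L) : BAMeasure 𝒜 where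
  toFun A := sSup {x | ∃ μ, Minor L μ ∧ x = μ.toFun A}
  map_empty := by
    apply le_antisymm
    · exact cont_le hL fun μ _ => μ.map_empty.le
    · exact le_cont (minor_zero hL) 𝒜.empty_mem
  additive A B hA hB h := by
    apply le_antisymm
    · refine cont_le hL fun μ hμ => ?_
      rw [μ.additive hA hB h]
      exact add_le_add (le_cont hμ hA) (le_cont hμ hB)
    · rw [← le_sub_iff_add_le]
      refine cont_le hL fun μ hμ => ?_
      rw [le_sub_comm]
      refine cont_le hL fun ν hν => ?_
      obtain ⟨κ, hκ, hle⟩ := hμ.sup hν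
      have h1 := le_cont hκ (𝒜.union_mem hA hB)
      rw [κ.additive hA hB h] at h1
      linarith [(hle A hA).1, (hle B hB).2]
  bounded := by
    obtain ⟨M, hM⟩ := L.bounded
    refine ⟨M, fun A hA => ?_⟩
    rw [abs_of_nonneg (le_cont (minor_zero hL) hA)]
    exact (cont_le hL fun μ hμ => hμ.2.2 A hA).trans ((le_abs_self _).trans (hM A hA))

lemma minor_contM (L : BAMeasure 𝒜) (hL : NN L) : Minor L (contM L hL) := by
  have hn : NN (contM L hL) := fun A hA => le_cont (minor_zero hL) hA
  refine ⟨fun ε hε => ?_, hn, fun A hA => cont_le hL fun μ hμ => hμ.2.2 A hA⟩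
  have : ∃ μ, Minor L μ ∧ (contM L hL).toFun Set.univ - ε / 2 < μ.toFun Set.univ := by
    by_contra hcon
    push Not at hcon
    have : (contM L hL).toFun Set.univ ≤ _ := cont_le hL hcon
    linarith
  obtain ⟨μ, hμ, hlt⟩ := this
  obtain ⟨N, A, hA, hAd, hAu, hAe⟩ := hμ.1 (ε / 2) (by linarith)
  refine ⟨N, A, hA, hAd, hAu, fun n => ?_⟩
  have h1 := hAe n
  rw [var_of_NN hμ.2.1 (hA n)] at h1
  rw [var_of_NN hn (hA n)]
  have h2 := toFun_diff μ 𝒜.univ_mem (hA n) (Set.subset_univ _)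
  have h3 := toFun_diff (contM L hL) 𝒜.univ_mem (hA n) (Set.subset_univ _)
  have h4 : _ ≤ (contM L hL).toFun _ := le_cont hμ (SetAlg.diff_mem 𝒜.univ_mem (hA n))
  linarith

lemma SD_rest (L : BAMeasure 𝒜) (hL : NN L) :
    StronglyDiscontinuous (addM L (negM (contM L hL))) := by
  intro τ hτ ε hε
  have hm := minor_contM L hL
  set D := addM L (negM (contM L hL)) with hD
  have hDa : ∀ A, D.toFun A = L.toFun A - (contM L hL).toFun A := fun A =>
    (sub_eq_add_neg _ _).symm
  have hDn : NN D := fun A hA => by rw [hDa]; linarith [hm.2.2 A hA]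
  set Q := posM (addM (varM τ) (negM D)) with hQ
  have hQle : ∀ A ∈ 𝒜.sets, Q.toFun A ≤ var τ A := by
    intro A hA
    refine posM_le _ fun B hB hBA => ?_
    change var τ B + -D.toFun B ≤ _
    linarith [hDn B hB, var_mono τ hB hA hBA]
  have hQge : ∀ A ∈ 𝒜.sets, var τ A - D.toFun A ≤ Q.toFun A := by
    intro A hA
    have : var τ A + -D.toFun A ≤ _ :=
      le_posM (addM (varM τ) (negM D)) hA (subset_refl A)
    linarith
  let K := addM (contM L hL) (addM (varM τ) (negM Q))
  have hKa : ∀ A, K.toFun A = (contM L hL).toFun A + (var τ A + - Q.toFun A) := fun A => rfl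
  have hKn : NN K := fun A hA => by rw [hKa]; linarith [hm.2.1 A hA, hQle A hA]
  have hK : Minor L K := by
    refine ⟨SC_of_NN_le hm.1 hτ hKn fun A hA => ?_, hKn, fun A hA => ?_⟩
    · rw [hKa, var_of_NN hm.2.1 hA]
      linarith [posM_nonneg (addM (varM τ) (negM D)) A]
    · rw [hKa]
      linarith [hQge A hA, hDa A]
  have h1 : K.toFun Set.univ ≤ (contM L hL).toFun Set.univ := le_cont hK 𝒜.univ_mem
  rw [hKa] at h1
  by_contra hcon
  push Not at hcon
  have h2 : Q.toFun Set.univ ≤ var τ Set.univ - ε := by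
    refine posM_le _ fun B hB _ => ?_
    change var τ B + -D.toFun B ≤ _
    have h3 := hcon B hB
    rw [var_of_NN hDn hB] at h3
    have h4 := toFun_diff (varM τ) 𝒜.univ_mem hB (Set.subset_univ _)
    rw [← Set.compl_eq_univ_diff] at h4
    simp only [varM_apply] at h4
    by_cases h5 : D.toFun B < ε
    · linarith [h3 h5, hDn B hB]
    · linarith [var_nonneg τ Bᶜ]
  linarith

lemma posM_sub (μ : BAMeasure 𝒜) {A : Set Ω} (hA : A ∈ 𝒜.sets) :
    μ.toFun A = (posM μ).toFun A - (posM (negM μ)).toFun A := by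
  have h1 : (posM μ).toFun A ≤ μ.toFun A + (posM (negM μ)).toFun A := by
    refine posM_le _ fun B hB hBA => ?_
    have h : -μ.toFun (A \ B) ≤ _ :=
      le_posM (negM μ) (A := A) (SetAlg.diff_mem hA hB) Set.diff_subset
    linarith [toFun_diff μ hA hB hBA]
  have h2 : (posM (negM μ)).toFun A ≤ (posM μ).toFun A - μ.toFun A := by
    refine posM_le _ fun B hB hBA => ?_
    have h := le_posM μ (A := A) (SetAlg.diff_mem hA hB) Set.diff_subset
    change -μ.toFun B ≤ _
    linarith [toFun_diff μ hA hB hBA]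
  linarith

lemma exists_decomp (l : BAMeasure 𝒜) : ∃ c d : BAMeasure 𝒜,
    StronglyContinuous c ∧ StronglyDiscontinuous d ∧
      ∀ A ∈ 𝒜.sets, l.toFun A = c.toFun A + d.toFun A := by
  have h1 : NN (posM l) := fun A _ => posM_nonneg _ _
  have h2 : NN (posM (negM l)) := fun A _ => posM_nonneg _ _
  refine ⟨addM (contM _ h1) (negM (contM _ h2)),
    addM (addM (posM l) (negM (contM _ h1)))
      (negM (addM (posM (negM l)) (negM (contM _ h2)))),
    SC_sub (minor_contM _ h1).1 (minor_contM _ h2).1,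
    SD_of_le_add (SD_rest _ h1) (SD_rest _ h2) fun A hA => ?_, fun A hA => ?_⟩
  · refine (abs_add_le _ _).trans (add_le_add (abs_le_var _ hA) ?_)
    exact (abs_neg _).trans_le (abs_le_var _ hA)
  · rw [posM_sub l hA]
    simp only [addM, negM]
    ring

end Helpers

/-- Lemma 8: each `λ ∈ ba(𝒜)` decomposes uniquely as `λ = λ_c + λ_d` with `λ_c` strongly
continuous and `λ_d` strongly discontinuous; moreover `λ_c` coincides with the strongly
continuous part `λ₀` of any Sobczyk–Hammer decomposition `λ = λ₀ + Σ_n a_n λ_n`. -/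
theorem stmt_5 {Ω : Type*} {𝒜 : SetAlg Ω} (lam : BAMeasure 𝒜) :
    ∃ lamc lamd : BAMeasure 𝒜,
      StronglyContinuous lamc ∧ StronglyDiscontinuous lamd ∧
      (∀ A ∈ 𝒜.sets, lam.toFun A = lamc.toFun A + lamd.toFun A) ∧
      (∀ c d : BAMeasure 𝒜, StronglyContinuous c → StronglyDiscontinuous d →
        (∀ A ∈ 𝒜.sets, lam.toFun A = c.toFun A + d.toFun A) →
        ∀ A ∈ 𝒜.sets, c.toFun A = lamc.toFun A ∧ d.toFun A = lamd.toFun A) ∧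
      (∀ (lam0 : BAMeasure 𝒜) (a : ℕ → ℝ) (lams : ℕ → BAMeasure 𝒜),
        StronglyContinuous lam0 →
        (∀ n, ∀ A ∈ 𝒜.sets, (lams n).toFun A = 0 ∨ (lams n).toFun A = 1) →
        (∀ i j, a i ≠ 0 → a j ≠ 0 → i ≠ j →
          ∃ A ∈ 𝒜.sets, (lams i).toFun A ≠ (lams j).toFun A) →
        Summable (fun n => |a n|) →
        (∀ A ∈ 𝒜.sets,
          HasSum (fun n => a n * (lams n).toFun A) (lam.toFun A - lam0.toFun A)) →
        ∀ A ∈ 𝒜.sets, lam0.toFun A = lamc.toFun A) := by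
  obtain ⟨c, d, hc, hd, h⟩ := exists_decomp lam
  refine ⟨c, d, hc, hd, h, ?_, ?_⟩
  · intro c' d' hc' hd' h' A hA
    have h1 := uniq hc' hd' hc hd h' h hA
    exact ⟨h1, by linarith [h A hA, h' A hA]⟩
  · intro lam0 a lams h0 h01 _ ha hs A hA
    have hd' : StronglyDiscontinuous (addM lam (negM lam0)) :=
      SD_of_hasSum a lams h01 ha fun B hB => by
        have := hs B hB
        rw [sub_eq_add_neg] at this
        exact this
    refine uniq (l := lam) h0 hd' hc hd (fun B hB => ?_) h hA
    simp only [addM, negM]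
    ring


end FA
end

section
/- Let 𝒜 be a σ-algebra and λ countably additive and nonnegative. Let K⊆L⁰(λ)₊ be convex and bounded in L⁰(λ), C={f∈L⁰(λ)₊: f≤g for some g∈K}, and D=C∩L^∞(λ). Then for every μ∈𝔓_*(λ;K), the closure of D in the weak* topology of L^∞(λ) (as the dual of L¹(λ)) equals (closure of D in L¹(μ)) ∩ L^∞(λ). -/
open Set Filter Topology

namespace FA

variable {Ω : Type*} {𝒜 : SetAlg Ω}

/-- The closure of `C` in `L⁰(λ)` (with respect to the metric `d`). -/
def cl0 (lam : BAMeasure 𝒜) (C : Set (Ω → ℝ)) : Set (Ω → ℝ) :=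
  {f ∈ L0 lam | ∀ ε > (0:ℝ), ∃ g ∈ C, dL0 lam f g < ε}

/-- The closure of `C` in `L¹(μ)` (with respect to the seminorm `∫| · |d|μ|`). -/
def cl1 (mu : BAMeasure 𝒜) (C : Set (Ω → ℝ)) : Set (Ω → ℝ) :=
  {f | MemL1 mu f ∧ ∀ ε > (0:ℝ), ∃ g ∈ C, l1Norm mu (f - g) < ε}

/-- `L^∞(λ)`: the `λ`-essentially bounded elements of `L⁰(λ)`. -/
def Linfty (lam : BAMeasure 𝒜) : Set (Ω → ℝ) :=
  {f ∈ L0 lam | ∃ M : ℝ, outer lam {ω | M < |f ω|} = 0}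

/-- The closure of `D` in the weak* topology of `L^∞(λ)` as the dual of `L¹(λ)`. -/
def weakStarCl (lam : BAMeasure 𝒜) (D : Set (Ω → ℝ)) : Set (Ω → ℝ) :=
  {f ∈ Linfty lam | ∀ ε > (0:ℝ), ∀ (n : ℕ) (g : Fin n → Ω → ℝ),
    (∀ i, MemL1 lam (g i)) →
    ∃ h ∈ D, ∀ i, |integral lam (fun ω => (f ω - h ω) * g i ω)| < ε}

section Bridge

open MeasureTheory

/-- `N` is a genuine measure representing `nu`, on a measurable space representing `𝒜`. -/
structure Rep [MeasurableSpace Ω] (nu : BAMeasure 𝒜) (N : Measure Ω) : Prop where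
  meas : ∀ A : Set Ω, MeasurableSet A ↔ A ∈ 𝒜.sets
  val : ∀ A ∈ 𝒜.sets, nu.toFun A = N.real A

theorem mono_of_nonneg (nu : BAMeasure 𝒜) (h0 : ∀ A ∈ 𝒜.sets, 0 ≤ nu.toFun A)
    {A B : Set Ω} (hA : A ∈ 𝒜.sets) (hB : B ∈ 𝒜.sets) (h : B ⊆ A) : nu.toFun B ≤ nu.toFun A := by
  have hd : A \ B ∈ 𝒜.sets := by
    have := 𝒜.compl_mem (𝒜.union_mem (𝒜.compl_mem hA) hB)
    simpa [Set.compl_union, Set.sdiff_eq] using this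
  have := nu.additive hB hd disjoint_sdiff_self_right
  rw [Set.union_sdiff_cancel h] at this
  linarith [h0 _ hd]

theorem var_of_nonneg (nu : BAMeasure 𝒜) (h0 : ∀ A ∈ 𝒜.sets, 0 ≤ nu.toFun A)
    {A : Set Ω} (hA : A ∈ 𝒜.sets) : var nu A = nu.toFun A := by
  unfold var
  have h1 : IsGreatest {x | ∃ B ∈ 𝒜.sets, B ⊆ A ∧ x = nu.toFun B} (nu.toFun A) := by
    refine ⟨⟨A, hA, subset_rfl, rfl⟩, ?_⟩
    rintro x ⟨B, hB, hBA, rfl⟩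
    exact mono_of_nonneg nu h0 hA hB hBA
  have h2 : IsGreatest {x | ∃ B ∈ 𝒜.sets, B ⊆ A ∧ x = -nu.toFun B} 0 := by
    refine ⟨⟨∅, 𝒜.empty_mem, Set.empty_subset _, by simp [nu.map_empty]⟩, ?_⟩
    rintro x ⟨B, hB, hBA, rfl⟩
    linarith [h0 B hB]
  rw [h1.csSup_eq, h2.csSup_eq, add_zero]

/-- The measurable space of a σ-algebra. -/
def SetAlg.toMS (𝒜 : SetAlg Ω) (hσ : IsSigmaAlg 𝒜) : MeasurableSpace Ω where
  MeasurableSet' A := A ∈ 𝒜.sets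
  measurableSet_empty := 𝒜.empty_mem
  measurableSet_compl _ h := 𝒜.compl_mem h
  measurableSet_iUnion f h := hσ f h

theorem exists_rep [MeasurableSpace Ω] (hm : ∀ A : Set Ω, MeasurableSet A ↔ A ∈ 𝒜.sets)
    (nu : BAMeasure 𝒜) (hca : CountablyAdditive nu) (h0 : ∀ A ∈ 𝒜.sets, 0 ≤ nu.toFun A) :
    ∃ N : Measure Ω, IsFiniteMeasure N ∧ Rep nu N := by
  let N : Measure Ω := Measure.ofMeasurable (fun A _ => ENNReal.ofReal (nu.toFun A))
    (by simp [nu.map_empty]) (by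
      intro f hf hd
      have hU : (⋃ i, f i) ∈ 𝒜.sets := (hm _).1 (MeasurableSet.iUnion hf)
      have := hca f (fun i => (hm _).1 (hf i)) hd hU
      rw [← this.tsum_eq, ENNReal.ofReal_tsum_of_nonneg (fun n => h0 _ ((hm _).1 (hf n)))
        this.summable])
  have hN : ∀ A ∈ 𝒜.sets, N A = ENNReal.ofReal (nu.toFun A) := fun A hA =>
    Measure.ofMeasurable_apply A ((hm A).2 hA)
  refine ⟨N, ⟨?_⟩, hm, ?_⟩
  · rw [hN _ ((hm _).1 MeasurableSet.univ)]
    exact ENNReal.ofReal_lt_top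
  · intro A hA
    rw [measureReal_def, hN A hA, ENNReal.toReal_ofReal (h0 A hA)]

section
variable [MeasurableSpace Ω] {nu : BAMeasure 𝒜} {N : Measure Ω} [IsFiniteMeasure N]

theorem Rep.nonneg (h : Rep nu N) : ∀ A ∈ 𝒜.sets, 0 ≤ nu.toFun A := fun A hA => by
  rw [h.val A hA]; exact measureReal_nonneg

theorem Rep.var (h : Rep nu N) {A : Set Ω} (hA : A ∈ 𝒜.sets) : var nu A = N.real A := by
  rw [var_of_nonneg nu h.nonneg hA, h.val A hA]

theorem Rep.outer (h : Rep nu N) (B : Set Ω) : outer nu B = N.real B := by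
  unfold FA.outer
  refine IsLeast.csInf_eq ⟨⟨toMeasurable N B, (h.meas _).1 (measurableSet_toMeasurable _ _),
    subset_toMeasurable _ _, ?_⟩, ?_⟩
  · rw [h.var ((h.meas _).1 (measurableSet_toMeasurable _ _)), measureReal_def, measureReal_def,
      measure_toMeasurable]
  · rintro x ⟨A, hA, hBA, rfl⟩
    rw [h.var hA]
    exact measureReal_mono hBA

theorem Rep.lconv (h : Rep nu N) (s : ℕ → Ω → ℝ) (f : Ω → ℝ) :
    LConv nu s f ↔ TendstoInMeasure N s atTop f := by
  rw [tendstoInMeasure_iff_measureReal_dist]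
  unfold LConv
  simp only [h.outer, Real.dist_eq]
  constructor
  · intro H c hc
    refine squeeze_zero (fun _ => measureReal_nonneg) (fun n => ?_) (H (c/2) (by positivity))
    exact measureReal_mono (fun x hx => by simp only [Set.mem_ofPred_eq] at hx ⊢; linarith)
  · intro H c hc
    refine squeeze_zero (fun _ => measureReal_nonneg) (fun n => ?_) (H c hc)
    exact measureReal_mono (fun x hx => by simp only [Set.mem_ofPred_eq] at hx ⊢; linarith)

theorem Rep.isSimple (h : Rep nu N) (f : Ω → ℝ) : IsSimple 𝒜 f ↔ ∃ F : SimpleFunc Ω ℝ, ⇑F = f := by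
  constructor
  · rintro ⟨h1, h2⟩
    exact ⟨⟨f, fun r => (h.meas _).2 (h2 r), h1⟩, rfl⟩
  · rintro ⟨F, rfl⟩
    exact ⟨F.finite_range, fun r => (h.meas _).1 (F.measurableSet_fiber r)⟩

theorem Rep.simpleIntegral (h : Rep nu N) (F : SimpleFunc Ω ℝ) (m : Set Ω → ℝ)
    (hm : ∀ A ∈ 𝒜.sets, m A = N.real A) : simpleIntegral m F = ∫ x, F x ∂N := by
  unfold FA.simpleIntegral
  have hval : ∀ r, m (F ⁻¹' {r}) = N.real (F ⁻¹' {r}) :=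
    fun r => hm _ ((h.meas _).1 (F.measurableSet_fiber r))
  rw [SimpleFunc.integral_eq_sum F (SimpleFunc.integrable_of_isFiniteMeasure F)]
  rw [finsum_eq_sum_of_support_subset (s := F.range)]
  · refine Finset.sum_congr rfl fun r _ => ?_
    rw [hval, smul_eq_mul, mul_comm]
  · intro r hr
    rw [Function.mem_support, hval] at hr
    by_contra hn
    apply hr
    have : F ⁻¹' {r} = ∅ := by
      rw [SimpleFunc.preimage_eq_empty_iff]; simpa using hn
    simp [this]

theorem Rep.l0 (h : Rep nu N) (f : Ω → ℝ) : f ∈ L0 nu ↔ AEMeasurable f N := by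
  constructor
  · rintro ⟨s, hs, hc⟩
    choose F hF using fun n => (h.isSimple (s n)).1 (hs n)
    refine TendstoInMeasure.aemeasurable (f := s) (u := atTop) (fun n => ?_) ((h.lconv s f).1 hc)
    rw [← hF n]; exact (F n).measurable.aemeasurable
  · intro hf
    have hs := hf.measurable_mk.stronglyMeasurable
    refine ⟨fun n => hs.approx n, fun n => (h.isSimple _).2 ⟨_, rfl⟩, (h.lconv _ _).2 ?_⟩
    refine TendstoInMeasure.congr_right hf.ae_eq_mk.symm ?_
    exact tendstoInMeasure_of_tendsto_ae (fun n => (hs.approx n).measurable.aestronglyMeasurable)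
      (Eventually.of_forall fun x => hs.tendsto_approx x)

theorem Rep.linfty (h : Rep nu N) (f : Ω → ℝ) :
    f ∈ Linfty nu ↔ AEMeasurable f N ∧ ∃ M : ℝ, ∀ᵐ x ∂N, |f x| ≤ M := by
  unfold Linfty
  simp only [Set.mem_ofPred_eq, h.l0, h.outer]
  refine and_congr_right fun _ => exists_congr fun M => ?_
  rw [ae_iff, measureReal_eq_zero_iff]
  simp only [not_le]

theorem Rep.l1_aux (h : Rep nu N) {f : Ω → ℝ} {s : ℕ → Ω → ℝ} (hs : ∀ n, IsSimple 𝒜 (s n))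
    (hc : LConv nu s f) (hcau : ∀ ε > (0:ℝ), ∃ N : ℕ, ∀ m ≥ N, ∀ n ≥ N,
      FA.simpleIntegral (FA.var nu) (fun ω => |s m ω - s n ω|) < ε) :
    Integrable f N ∧ Tendsto (fun n => ∫ x, |s n x - f x| ∂N) atTop (𝓝 0) := by
  choose F hF using fun n => (h.isSimple (s n)).1 (hs n)
  obtain rfl : (fun n => ⇑(F n)) = s := funext hF
  have hFi : ∀ n, Integrable (F n) N := fun n => SimpleFunc.integrable_of_isFiniteMeasure _
  have hI : ∀ m n, FA.simpleIntegral (FA.var nu) (fun ω => |F m ω - F n ω|)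
      = ∫ x, |F m x - F n x| ∂N := fun m n =>
    h.simpleIntegral ((F m - F n).map (fun r => |r|)) (FA.var nu) (fun A hA => h.var hA)
  simp only [hI] at hcau
  have hT := (h.lconv _ f).1 hc
  have hfm : AEStronglyMeasurable f N :=
    hT.aestronglyMeasurable (fun n => (hFi n).aestronglyMeasurable)
  obtain ⟨ns, hns, hae⟩ := hT.exists_seq_tendsto_ae
  have key : ∀ ε > (0:ℝ), ∃ n₀ : ℕ, ∀ n ≥ n₀, ∫⁻ x, ‖F n x - f x‖ₑ ∂N ≤ ENNReal.ofReal ε := by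
    intro ε hε
    obtain ⟨n₀, hn₀⟩ := hcau ε hε
    refine ⟨n₀, fun n hn => ?_⟩
    have e1 : ∫⁻ x, ‖F n x - f x‖ₑ ∂N ≤ ∫⁻ x, liminf (fun k => ‖F n x - F (ns k) x‖ₑ) atTop ∂N := by
      refine lintegral_mono_ae ?_
      filter_upwards [hae] with x hx
      exact le_of_eq ((tendsto_const_nhds.sub hx).enorm.liminf_eq).symm
    refine e1.trans ((lintegral_liminf_le' (fun k =>
      ((hFi n).sub (hFi (ns k))).aestronglyMeasurable.enorm)).trans ?_)
    refine liminf_le_of_frequently_le' (Eventually.frequently ?_)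
    filter_upwards [eventually_ge_atTop n₀] with k hk
    have := hn₀ n hn (ns k) (hk.trans (hns.id_le k))
    have e2 := ofReal_integral_norm_eq_lintegral_enorm ((hFi n).sub (hFi (ns k)))
    simp only [Pi.sub_apply, Real.norm_eq_abs] at e2
    simp only [Pi.sub_apply]
    rw [← e2]
    exact ENNReal.ofReal_le_ofReal this.le
  have hint : Integrable f N := by
    obtain ⟨n₀, hn₀⟩ := key 1 one_pos
    have : Integrable (fun x => F n₀ x - f x) N :=
      ⟨(hFi n₀).aestronglyMeasurable.sub hfm, (hn₀ n₀ le_rfl).trans_lt ENNReal.ofReal_lt_top⟩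
    have h2 := (hFi n₀).sub this
    simpa [Pi.sub_def] using h2
  refine ⟨hint, ?_⟩
  rw [Metric.tendsto_atTop]
  intro ε hε
  obtain ⟨n₀, hn₀⟩ := key (ε/2) (by positivity)
  refine ⟨n₀, fun n hn => ?_⟩
  have e2 := ofReal_integral_norm_eq_lintegral_enorm ((hFi n).sub hint)
  simp only [Pi.sub_apply, Real.norm_eq_abs] at e2
  have e3 := hn₀ n hn
  rw [← e2, ENNReal.ofReal_le_ofReal_iff (by positivity)] at e3
  rw [Real.dist_eq, sub_zero, abs_of_nonneg (integral_nonneg fun x => abs_nonneg _)]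
  linarith

theorem Rep.memL1 (h : Rep nu N) (f : Ω → ℝ) : MemL1 nu f ↔ Integrable f N := by
  constructor
  · rintro ⟨s, hs, hc, hcau⟩
    exact (h.l1_aux hs hc hcau).1
  · intro hf
    obtain ⟨g, hgm, hfg⟩ := hf.aestronglyMeasurable.aemeasurable
    have hg : Integrable g N := hf.congr hfg
    let F : ℕ → SimpleFunc Ω ℝ := SimpleFunc.approxOn g hgm (range g ∪ {0}) 0 (by simp)
    have hFi : ∀ n, Integrable (F n) N := fun n => SimpleFunc.integrable_of_isFiniteMeasure _
    have ht := SimpleFunc.tendsto_approxOn_range_L1_enorm hgm hg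
    have ht' : Tendsto (fun n => ∫ x, |F n x - g x| ∂N) atTop (𝓝 0) := by
      have := (ENNReal.tendsto_toReal (a := 0) (by simp)).comp ht
      refine this.congr fun n => ?_
      have e2 := ofReal_integral_norm_eq_lintegral_enorm ((hFi n).sub hg)
      simp only [Pi.sub_apply, Real.norm_eq_abs] at e2
      simp only [Function.comp]
      change (∫⁻ x, ‖F n x - g x‖ₑ ∂N).toReal = _
      rw [← e2, ENNReal.toReal_ofReal (integral_nonneg fun x => abs_nonneg _)]
    refine ⟨fun n => F n, fun n => (h.isSimple _).2 ⟨_, rfl⟩, (h.lconv _ _).2 ?_, ?_⟩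
    · refine TendstoInMeasure.congr_right hfg.symm ?_
      refine tendstoInMeasure_of_tendsto_eLpNorm (p := 1) one_ne_zero
        (fun n => (hFi n).aestronglyMeasurable) hg.aestronglyMeasurable ?_
      simpa only [eLpNorm_one_eq_lintegral_enorm, Pi.sub_apply] using ht
    · intro ε hε
      obtain ⟨n₀, hn₀⟩ := (Metric.tendsto_atTop.1 ht') (ε/2) (by positivity)
      refine ⟨n₀, fun m hm n hn => ?_⟩
      have hI : FA.simpleIntegral (FA.var nu) (fun ω => |F m ω - F n ω|)
          = ∫ x, |F m x - F n x| ∂N :=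
        h.simpleIntegral ((F m - F n).map (fun r => |r|)) (FA.var nu) (fun A hA => h.var hA)
      rw [hI]
      have b : ∀ k ≥ n₀, ∫ x, |F k x - g x| ∂N < ε/2 := fun k hk => by
        have := hn₀ k hk
        rw [Real.dist_eq, sub_zero] at this
        exact (le_abs_self _).trans_lt this
      have i : ∀ k, Integrable (fun x => |F k x - g x|) N := fun k => ((hFi k).sub hg).abs
      calc ∫ x, |F m x - F n x| ∂N ≤ ∫ x, (|F m x - g x| + |F n x - g x|) ∂N := by
            refine integral_mono ((hFi m).sub (hFi n)).abs ((i m).add (i n)) fun x => ?_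
            have := abs_sub_le (F m x) (g x) (F n x)
            rwa [abs_sub_comm (g x)] at this
        _ = ∫ x, |F m x - g x| ∂N + ∫ x, |F n x - g x| ∂N := integral_add (i m) (i n)
        _ < ε := by linarith [b m hm, b n hn]

theorem Rep.integral (h : Rep nu N) {f : Ω → ℝ} (hf : Integrable f N) :
    integral nu f = ∫ x, f x ∂N := by
  have hm := (h.memL1 f).2 hf
  unfold FA.integral
  rw [dif_pos hm]
  obtain ⟨hs, hc, hcau⟩ := hm.choose_spec
  set s := hm.choose with hsdef
  have ht := (h.l1_aux hs hc hcau).2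
  choose F hF using fun n => (h.isSimple (s n)).1 (hs n)
  have hFi : ∀ n, Integrable (s n) N := fun n => by
    rw [← hF n]; exact SimpleFunc.integrable_of_isFiniteMeasure _
  refine Tendsto.limUnder_eq ?_
  have e : ∀ n, FA.simpleIntegral nu.toFun (s n) = ∫ x, s n x ∂N := fun n => by
    rw [← hF n]; exact h.simpleIntegral (F n) _ h.val
  simp only [e]
  rw [tendsto_iff_dist_tendsto_zero]
  refine squeeze_zero (fun _ => dist_nonneg) (fun n => ?_) ht
  rw [Real.dist_eq, ← integral_sub (hFi n) hf]
  exact abs_integral_le_integral_abs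

theorem Rep.l1Norm (h : Rep nu N) {f : Ω → ℝ} (hf : Integrable f N) :
    l1Norm nu f = ∫ x, |f x| ∂N := by
  have hm := (h.memL1 f).2 hf
  unfold FA.l1Norm
  rw [dif_pos hm]
  obtain ⟨hs, hc, hcau⟩ := hm.choose_spec
  set s := hm.choose with hsdef
  have ht := (h.l1_aux hs hc hcau).2
  choose F hF using fun n => (h.isSimple (s n)).1 (hs n)
  have hFi : ∀ n, Integrable (s n) N := fun n => by
    rw [← hF n]; exact SimpleFunc.integrable_of_isFiniteMeasure _
  refine Tendsto.limUnder_eq ?_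
  have e : ∀ n, FA.simpleIntegral (FA.var nu) (fun ω => |s n ω|) = ∫ x, |s n x| ∂N := fun n => by
    rw [← hF n]
    exact h.simpleIntegral ((F n).map (fun r => |r|)) _ (fun A hA => h.var hA)
  simp only [e]
  rw [tendsto_iff_dist_tendsto_zero]
  refine squeeze_zero (fun _ => dist_nonneg) (fun n => ?_) ht
  rw [Real.dist_eq, ← integral_sub (hFi n).abs hf.abs]
  refine abs_integral_le_integral_abs.trans ?_
  exact integral_mono ((hFi n).abs.sub hf.abs).abs ((hFi n).sub hf).abs
    fun x => abs_abs_sub_abs_le_abs_sub _ _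

end

theorem ca_of_dominated (hσ : IsSigmaAlg 𝒜) (lam mu : BAMeasure 𝒜) (hca : CountablyAdditive lam)
    (h0 : ∀ A ∈ 𝒜.sets, 0 ≤ mu.toFun A)
    (c : ℝ) (hc : ∀ A ∈ 𝒜.sets, mu.toFun A ≤ c * lam.toFun A) : CountablyAdditive mu := by
  intro A hA hd hU
  have hpart : ∀ n, (⋃ i ∈ Finset.range n, A i) ∈ 𝒜.sets ∧ ∀ nu : BAMeasure 𝒜,
      nu.toFun (⋃ i ∈ Finset.range n, A i) = ∑ i ∈ Finset.range n, nu.toFun (A i) := by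
    intro n
    induction n with
    | zero => simpa using ⟨𝒜.empty_mem, fun nu => nu.map_empty⟩
    | succ n ih =>
      have e : (⋃ i ∈ Finset.range (n+1), A i) = (⋃ i ∈ Finset.range n, A i) ∪ A n := by
        rw [Finset.range_add_one, Finset.set_biUnion_insert, Set.union_comm]
      rw [e]
      refine ⟨𝒜.union_mem ih.1 (hA n), fun nu => ?_⟩
      rw [nu.additive ih.1 (hA n), ih.2 nu, Finset.sum_range_succ]
      rw [Set.disjoint_iUnion₂_left]
      intro i hi
      exact hd (Finset.mem_range.1 hi).ne
  have hrest : ∀ n, ((⋃ i, A i) \ (⋃ i ∈ Finset.range n, A i)) ∈ 𝒜.sets ∧ ∀ nu : BAMeasure 𝒜,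
      nu.toFun ((⋃ i, A i) \ (⋃ i ∈ Finset.range n, A i))
        = nu.toFun (⋃ i, A i) - ∑ i ∈ Finset.range n, nu.toFun (A i) := by
    intro n
    have hd : ((⋃ i, A i) \ (⋃ i ∈ Finset.range n, A i)) ∈ 𝒜.sets := by
      have := 𝒜.compl_mem (𝒜.union_mem (𝒜.compl_mem hU) (hpart n).1)
      simpa only [Set.compl_union, Set.sdiff_eq, compl_compl] using this
    refine ⟨hd, fun nu => ?_⟩
    have := nu.additive (hpart n).1 hd disjoint_sdiff_self_right
    rw [Set.union_sdiff_cancel (Set.iUnion₂_subset fun i _ => Set.subset_iUnion A i),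
      (hpart n).2 nu] at this
    linarith
  rw [hasSum_iff_tendsto_nat_of_nonneg (fun i => h0 _ (hA i))]
  have h1 := (hca A hA hd hU).tendsto_sum_nat
  have h2 : Tendsto (fun n => c * (lam.toFun (⋃ i, A i) - ∑ i ∈ Finset.range n, lam.toFun (A i)))
      atTop (𝓝 0) := by
    simpa using ((tendsto_const_nhds (x := lam.toFun (⋃ i, A i))).sub h1).const_mul c
  have h3 : Tendsto (fun n => mu.toFun (⋃ i, A i) - ∑ i ∈ Finset.range n, mu.toFun (A i))
      atTop (𝓝 0) := by
    refine squeeze_zero (fun n => ?_) (fun n => ?_) h2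
    · rw [← (hrest n).2]; exact h0 _ (hrest n).1
    · rw [← (hrest n).2, ← (hrest n).2]; exact hc _ (hrest n).1
  simpa using (tendsto_const_nhds (x := mu.toFun (⋃ i, A i))).sub h3

theorem separate [MeasurableSpace Ω] (M : Measure Ω) [IsProbabilityMeasure M]
    (D : Set (Ω → ℝ)) (hD : Convex ℝ D) (hD2 : ∀ h ∈ D, MemLp h 2 M) (f : Ω → ℝ)
    (hf : MemLp f 2 M) (ε : ℝ) (hε : 0 < ε) (hfar : ∀ h ∈ D, ε ≤ ∫ x, |f x - h x| ∂M) :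
    ∃ u : Ω → ℝ, MemLp u 2 M ∧ ∃ δ > (0:ℝ), ∀ h ∈ D, δ ≤ ∫ x, (h x - f x) * u x ∂M := by
  have h12 : (1 : ENNReal) ≤ 2 := one_le_two
  let J₀ : Lp ℝ 2 M →ₗ[ℝ] Lp ℝ 1 M :=
    { toFun := fun v => ((Lp.memLp v).mono_exponent h12).toLp v
      map_add' := fun v w => by
        rw [← MemLp.toLp_add]
        exact MemLp.toLp_congr _ _ (Lp.coeFn_add v w)
      map_smul' := fun a v => by
        rw [RingHom.id_apply, ← MemLp.toLp_const_smul]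
        exact MemLp.toLp_congr _ _ (Lp.coeFn_smul a v) }
  let J : Lp ℝ 2 M →L[ℝ] Lp ℝ 1 M := J₀.mkContinuous 1 (fun v => by
    rw [one_mul]
    change ‖((Lp.memLp v).mono_exponent h12).toLp v‖ ≤ _
    rw [Lp.norm_toLp, Lp.norm_def]
    exact ENNReal.toReal_mono (Lp.memLp v).eLpNorm_ne_top
      (eLpNorm_le_eLpNorm_of_exponent_le h12 (Lp.aestronglyMeasurable v)))
  let S : Set (Lp ℝ 1 M) := {x | ∃ h ∈ D, x =ᵐ[M] h}
  have hS : Convex ℝ S := by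
    rintro x ⟨h, hh, hx⟩ y ⟨k, hk, hy⟩ a b ha hb hab
    refine ⟨a • h + b • k, hD hh hk ha hb hab, ?_⟩
    filter_upwards [hx, hy, Lp.coeFn_add (a • x) (b • y), Lp.coeFn_smul a x, Lp.coeFn_smul b y]
      with ω h1 h2 h3 h4 h5
    rw [h3, Pi.add_apply, h4, h5]
    simp only [Pi.add_apply, Pi.smul_apply, h1, h2]
  have hf1 := hf.mono_exponent h12
  have hnot : hf1.toLp f ∉ closure S := by
    intro hcl
    obtain ⟨y, ⟨h, hh, hy⟩, hd⟩ := Metric.mem_closure_iff.1 hcl ε hε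
    have := hfar h hh
    have e : dist (hf1.toLp f) y = ∫ x, |f x - h x| ∂M := by
      rw [dist_eq_norm, L1.norm_eq_integral_norm]
      refine integral_congr_ae ?_
      filter_upwards [hy, Lp.coeFn_sub (hf1.toLp f) y, hf1.coeFn_toLp] with ω h1 h2 h3
      rw [h2, Pi.sub_apply, h1, h3, Real.norm_eq_abs]
    linarith
  obtain ⟨ℓ, c, h1, h2⟩ := geometric_hahn_banach_point_closed hS.closure isClosed_closure hnot
  let u : Lp ℝ 2 M := (InnerProductSpace.toDual ℝ (Lp ℝ 2 M)).symm (ℓ.comp J)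
  have hu : ∀ (k : Ω → ℝ) (hk : MemLp k 2 M) (hk1 : MemLp k 1 M),
      ℓ (hk1.toLp k) = ∫ x, k x * u x ∂M := by
    intro k hk hk1
    have e1 : inner ℝ u (hk.toLp k) = (ℓ.comp J) (hk.toLp k) :=
      InnerProductSpace.toDual_symm_apply
    have e2 : J (hk.toLp k) = hk1.toLp k := by
      change ((Lp.memLp (hk.toLp k)).mono_exponent h12).toLp _ = _
      exact MemLp.toLp_congr _ _ hk.coeFn_toLp
    rw [ContinuousLinearMap.comp_apply, e2] at e1
    rw [← e1, L2.inner_def]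
    refine integral_congr_ae ?_
    filter_upwards [hk.coeFn_toLp] with ω hω
    rw [hω]
    simp
  refine ⟨u, Lp.memLp u, c - ∫ x, f x * u x ∂M, ?_, ?_⟩
  · have := hu f hf hf1
    linarith
  · intro h hh
    have hh1 := (hD2 h hh).mono_exponent h12
    have := h2 _ (subset_closure ⟨h, hh, hh1.coeFn_toLp⟩)
    rw [hu h (hD2 h hh) hh1] at this
    have e : ∫ x, (h x - f x) * u x ∂M = ∫ x, h x * u x ∂M - ∫ x, f x * u x ∂M := by
      have i1 : Integrable (fun x => h x * u x) M := (hD2 h hh).integrable_mul (Lp.memLp u)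
      have i2 : Integrable (fun x => f x * u x) M := hf.integrable_mul (Lp.memLp u)
      rw [← integral_sub i1 i2]
      refine integral_congr_ae (Eventually.of_forall fun x => ?_)
      simp only [sub_mul]
    linarith

theorem main_aux [MeasurableSpace Ω] {lam mu : BAMeasure 𝒜} {L M : Measure Ω} [IsFiniteMeasure L]
    [IsProbabilityMeasure M] (hL : Rep lam L) (hM : Rep mu M) (hML : M ≪ L) (hLM : L ≪ M)
    (D : Set (Ω → ℝ)) (hD : Convex ℝ D) (hD1 : D ⊆ Linfty lam)
    (hDpos : ∀ h ∈ D, ∀ x, 0 ≤ h x)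
    (hsolid : ∀ h ∈ D, ∀ k ∈ Linfty lam, (∀ x, 0 ≤ k x) → (∀ x, k x ≤ h x) → k ∈ D) :
    weakStarCl lam D = cl1 mu D ∩ Linfty lam := by
  have hLi : ∀ h ∈ Linfty lam, MemLp h ⊤ L := fun h hh => by
    obtain ⟨h1, B, h2⟩ := (hL.linfty h).1 hh
    exact memLp_top_of_bound h1.aestronglyMeasurable B h2
  have hMi : ∀ h ∈ Linfty lam, MemLp h ⊤ M := fun h hh => by
    obtain ⟨h1, B, h2⟩ := (hL.linfty h).1 hh
    exact memLp_top_of_bound (h1.mono_ac hML).aestronglyMeasurable B (hML.ae_le h2)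
  have hM1 : ∀ h ∈ Linfty lam, Integrable h M := fun h hh => (hMi h hh).integrable le_top
  have hprod : ∀ f ∈ Linfty lam, ∀ h ∈ Linfty lam, ∀ g, Integrable g L →
      Integrable (fun x => (f x - h x) * g x) L := fun f hf h hh g hg => by
    have := ((hLi f hf).sub (hLi h hh)).integrable_mul (memLp_one_iff_integrable.2 hg)
    exact this
  ext f
  constructor
  · rintro ⟨hf, hw⟩
    refine ⟨⟨(hM.memL1 f).2 (hM1 f hf), ?_⟩, hf⟩
    by_contra hcon
    push Not at hcon
    obtain ⟨ε, hε, hfar⟩ := hcon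
    have hfar' : ∀ h ∈ D, ε ≤ ∫ x, |f x - h x| ∂M := fun h hh => by
      have := hfar h hh
      rwa [hM.l1Norm ((hM1 f hf).sub (hM1 h (hD1 hh)))] at this
    obtain ⟨u, hu, δ, hδ, hsep⟩ := separate M D hD
      (fun h hh => (hMi h (hD1 hh)).mono_exponent le_top) f ((hMi f hf).mono_exponent le_top)
      ε hε hfar'
    have hui : Integrable u M := hu.integrable one_le_two
    have hg : Integrable (fun x => (M.rnDeriv L x).toReal • u x) L :=
      (integrable_rnDeriv_smul_iff hML).2 hui
    obtain ⟨h, hh, hlt⟩ := hw δ hδ 1 (fun _ x => (M.rnDeriv L x).toReal • u x)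
      (fun _ => (hL.memL1 _).2 hg)
    have h1 := hlt 0
    rw [hL.integral (hprod f hf h (hD1 hh) _ hg)] at h1
    have e : ∫ x, (f x - h x) * ((M.rnDeriv L x).toReal • u x) ∂L
        = - ∫ x, (h x - f x) * u x ∂M := by
      rw [← integral_rnDeriv_smul hML, ← MeasureTheory.integral_neg]
      refine integral_congr_ae (Eventually.of_forall fun x => ?_)
      simp only [smul_eq_mul]
      ring
    rw [e, abs_neg] at h1
    have := hsep h hh
    linarith [le_abs_self (∫ x, (h x - f x) * u x ∂M)]
  · rintro ⟨⟨hf1, hcl⟩, hf⟩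
    refine ⟨hf, ?_⟩
    intro ε hε n g hg
    obtain ⟨hfm, B₀, hB₀⟩ := (hL.linfty f).1 hf
    set B := max B₀ 0 with hB
    have hfB : ∀ᵐ x ∂L, |f x| ≤ B := hB₀.mono fun x hx => hx.trans (le_max_left _ _)
    have hBpos : 0 ≤ B := le_max_right _ _
    choose k hkD hk using fun m : ℕ => hcl (1 / ((m:ℝ) + 1)) (by positivity)
    let k' : ℕ → Ω → ℝ := fun m x => min (k m x) B
    have hk'0 : ∀ m x, 0 ≤ k' m x := fun m x => le_min (hDpos _ (hkD m) x) hBpos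
    have hk'B : ∀ m x, |k' m x| ≤ B := fun m x => by
      rw [abs_of_nonneg (hk'0 m x)]; exact min_le_right _ _
    have hk'L : ∀ m, k' m ∈ Linfty lam := fun m => (hL.linfty _).2
      ⟨((hL.linfty _).1 (hD1 (hkD m))).1.min aemeasurable_const, B, Eventually.of_forall (hk'B m)⟩
    have hk'D : ∀ m, k' m ∈ D := fun m =>
      hsolid _ (hkD m) _ (hk'L m) (hk'0 m) (fun x => min_le_left _ _)
    have hlim : Tendsto (fun m => ∫ x, |k' m x - f x| ∂M) atTop (𝓝 0) := by
      refine squeeze_zero (fun m => integral_nonneg fun x => abs_nonneg _) (fun m => ?_)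
        tendsto_one_div_add_atTop_nhds_zero_nat
      have h1 := (hk m).le
      rw [hM.l1Norm ((hM1 f hf).sub (hM1 _ (hD1 (hkD m))))] at h1
      refine le_trans ?_ h1
      refine integral_mono_ae ((hM1 _ (hk'L m)).sub (hM1 f hf)).abs
        ((hM1 f hf).sub (hM1 _ (hD1 (hkD m)))).abs ?_
      filter_upwards [hML.ae_le hfB] with x hx
      simp only [Pi.sub_apply, k']
      rw [abs_sub_comm (f x)]
      have hx' := (abs_le.1 hx).2
      rcases le_total (k m x) B with h2 | h2
      · rw [min_eq_left h2]
      · rw [min_eq_right h2, abs_of_nonneg (by linarith), abs_of_nonneg (by linarith)]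
        linarith
    have hmeas : TendstoInMeasure M k' atTop f := by
      refine tendstoInMeasure_of_tendsto_eLpNorm (p := 1) one_ne_zero
        (fun m => (hM1 _ (hk'L m)).aestronglyMeasurable) (hM1 f hf).aestronglyMeasurable ?_
      have := ENNReal.tendsto_ofReal hlim
      rw [ENNReal.ofReal_zero] at this
      refine this.congr fun m => ?_
      rw [eLpNorm_one_eq_lintegral_enorm,
        ← ofReal_integral_norm_eq_lintegral_enorm ((hM1 _ (hk'L m)).sub (hM1 f hf))]
      rfl
    obtain ⟨ns, hns, hae⟩ := hmeas.exists_seq_tendsto_ae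
    have haeL := hLM.ae_le hae
    have hgi : ∀ i, Integrable (g i) L := fun i => (hL.memL1 _).1 (hg i)
    have hdct : ∀ i, Tendsto (fun j => ∫ x, (f x - k' (ns j) x) * g i x ∂L) atTop (𝓝 0) := by
      intro i
      have := tendsto_integral_of_dominated_convergence (μ := L)
        (F := fun j x => (f x - k' (ns j) x) * g i x) (f := fun _ => (0:ℝ))
        (fun x => 2 * B * |g i x|)
        (fun j => (hprod f hf _ (hk'L (ns j)) _ (hgi i)).aestronglyMeasurable)
        ((hgi i).abs.const_mul _) (fun j => by
          filter_upwards [hfB] with x hx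
          rw [Real.norm_eq_abs, abs_mul]
          refine mul_le_mul_of_nonneg_right ?_ (abs_nonneg _)
          have := abs_sub (f x) (k' (ns j) x)
          linarith [hk'B (ns j) x]) (by
          filter_upwards [haeL] with x hx
          have := ((tendsto_const_nhds (x := f x)).sub hx).mul_const (g i x)
          simpa using this)
      simpa using this
    have hev : ∀ᶠ j in atTop, ∀ i, |∫ x, (f x - k' (ns j) x) * g i x ∂L| < ε := by
      rw [eventually_all]
      intro i
      have := (hdct i).abs
      rw [abs_zero] at this
      exact this.eventually_lt_const hε
    obtain ⟨j, hj⟩ := hev.exists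
    refine ⟨k' (ns j), hk'D _, fun i => ?_⟩
    rw [hL.integral (hprod f hf _ (hk'L (ns j)) _ (hgi i))]
    exact hj i

end Bridge

/-- Theorem 19: for `𝒜` a σ-algebra and `λ` countably additive and nonnegative, with `K`,
`C` as in Theorem 18 and `D = C ∩ L^∞(λ)`, the weak* closure of `D` in `L^∞(λ)` equals
`(closure of D in L¹(μ)) ∩ L^∞(λ)` for every `μ ∈ 𝔓_*(λ; K)`. -/
theorem stmt_11 {Ω : Type*} {𝒜 : SetAlg Ω} (hσ : IsSigmaAlg 𝒜)
    (lam : BAMeasure 𝒜) (hca : CountablyAdditive lam)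
    (hpos : ∀ A ∈ 𝒜.sets, 0 ≤ lam.toFun A)
    (K : Set (Ω → ℝ)) (hK : K ⊆ L0pos lam) (hconv : Convex ℝ K)
    (hbdd : BddL0 lam K)
    (C : Set (Ω → ℝ)) (hC : C = {f ∈ L0pos lam | ∃ g ∈ K, ∀ ω, f ω ≤ g ω})
    (D : Set (Ω → ℝ)) (hD : D = C ∩ Linfty lam) :
    ∀ mu : BAMeasure 𝒜, PStarWith lam K mu →
      weakStarCl lam D = cl1 mu D ∩ Linfty lam := by
  rintro mu ⟨⟨⟨hmu1, hmu0⟩, ⟨c, hc0, hc⟩, hnull⟩, -, -⟩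
  have hc' : ∀ A ∈ 𝒜.sets, mu.toFun A ≤ c * lam.toFun A := fun A hA => by
    have := hc A hA
    rwa [var_of_nonneg mu hmu0 hA, var_of_nonneg lam hpos hA] at this
  have hcamu := ca_of_dominated hσ lam mu hca hmu0 c hc'
  letI : MeasurableSpace Ω := 𝒜.toMS hσ
  have hm : ∀ A : Set Ω, MeasurableSet A ↔ A ∈ 𝒜.sets := fun A => Iff.rfl
  obtain ⟨L, hLfin, hL⟩ := exists_rep hm lam hca hpos
  obtain ⟨M, hMfin, hM⟩ := exists_rep hm mu hcamu hmu0
  have hMp : MeasureTheory.IsProbabilityMeasure M := by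
    constructor
    have := hM.val _ ((hm _).1 MeasurableSet.univ)
    rw [hmu1, MeasureTheory.measureReal_def] at this
    exact (ENNReal.toReal_eq_one_iff _).1 this.symm
  have hnull' : ∀ A, MeasurableSet A → (M A = 0 ↔ L A = 0) := fun A hA => by
    have hA' := (hm A).1 hA
    have := hnull A hA'
    rw [hM.val A hA', hL.var hA', MeasureTheory.measureReal_eq_zero_iff,
      MeasureTheory.measureReal_eq_zero_iff] at this
    exact this
  have hML : M.AbsolutelyContinuous L :=
    MeasureTheory.Measure.AbsolutelyContinuous.mk fun A hA h => (hnull' A hA).2 h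
  have hLM : L.AbsolutelyContinuous M :=
    MeasureTheory.Measure.AbsolutelyContinuous.mk fun A hA h => (hnull' A hA).1 h
  subst hC
  subst hD
  refine main_aux hL hM hML hLM _ ?_ Set.inter_subset_right (fun h hh => hh.1.1.2) ?_
  · rintro f ⟨⟨⟨hf0, hfp⟩, g, hg, hfg⟩, hfi⟩ f' ⟨⟨⟨hf0', hfp'⟩, g', hg', hfg'⟩, hfi'⟩ a b ha hb hab
    have hmeas : AEMeasurable (a • f + b • f') L :=
      (((hL.l0 f).1 hf0).const_smul a).add (((hL.l0 f').1 hf0').const_smul b)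
    refine ⟨⟨⟨(hL.l0 _).2 hmeas, fun ω => ?_⟩, a • g + b • g', hconv hg hg' ha hb hab,
      fun ω => ?_⟩, (hL.linfty _).2 ⟨hmeas, ?_⟩⟩
    · have h1 := mul_nonneg ha (hfp ω)
      have h2 := mul_nonneg hb (hfp' ω)
      simpa using add_nonneg h1 h2
    · have h1 := mul_le_mul_of_nonneg_left (hfg ω) ha
      have h2 := mul_le_mul_of_nonneg_left (hfg' ω) hb
      simpa using add_le_add h1 h2
    · obtain ⟨-, B, hB⟩ := (hL.linfty f).1 hfi
      obtain ⟨-, B', hB'⟩ := (hL.linfty f').1 hfi'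
      refine ⟨a * B + b * B', ?_⟩
      filter_upwards [hB, hB'] with x hx hx'
      have h1 := mul_le_mul_of_nonneg_left hx ha
      have h2 := mul_le_mul_of_nonneg_left hx' hb
      have h3 := abs_add_le (a * f x) (b * f' x)
      rw [abs_mul, abs_mul, abs_of_nonneg ha, abs_of_nonneg hb] at h3
      simp only [Pi.add_apply, Pi.smul_apply, smul_eq_mul]
      linarith
  · rintro h ⟨⟨-, g, hg, hhg⟩, -⟩ k hk hk0 hkh
    exact ⟨⟨⟨hk.1, hk0⟩, g, hg, fun ω => (hkh ω).trans (hhg ω)⟩, hk⟩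

end FA
end

section
/- Let (f_n) be a sequence in L⁰(λ) and define g_k = inf_{n,m>k}(f_n − f_m). If the sequence (g_k) λ-converges to 0, then liminf_n f_n = limsup_n f_n, λ-a.s. -/
open Set Filter Topology

namespace FA

variable {Ω : Type*} {𝒜 : SetAlg Ω}

theorem var_nonneg_aux {Ω : Type*} {𝒜 : SetAlg Ω} (lam : BAMeasure 𝒜) (A : Set Ω) :
    0 ≤ var lam A := by
  unfold var
  refine add_nonneg (Real.sSup_nonneg' ⟨0, ⟨∅, 𝒜.empty_mem, Set.empty_subset _, ?_⟩, le_rfl⟩)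
    (Real.sSup_nonneg' ⟨0, ⟨∅, 𝒜.empty_mem, Set.empty_subset _, ?_⟩, le_rfl⟩) <;> simp [lam.map_empty]

theorem outer_nonneg_aux {Ω : Type*} {𝒜 : SetAlg Ω} (lam : BAMeasure 𝒜) (A : Set Ω) :
    0 ≤ outer lam A := by
  apply Real.sInf_nonneg
  rintro x ⟨B, _, _, rfl⟩
  exact var_nonneg_aux lam B

theorem outer_mono_aux {Ω : Type*} {𝒜 : SetAlg Ω} (lam : BAMeasure 𝒜) {A B : Set Ω}
    (h : A ⊆ B) : outer lam A ≤ outer lam B := by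
  apply csInf_le_csInf
  · refine ⟨0, ?_⟩
    rintro x ⟨B, _, _, rfl⟩
    exact var_nonneg_aux lam B
  · exact ⟨_, ∅ᶜ, 𝒜.compl_mem 𝒜.empty_mem, by simp, rfl⟩
  · rintro x ⟨C, hC, hBC, rfl⟩
    exact ⟨C, hC, h.trans hBC, rfl⟩

/-- Theorem 30: with `g_k = inf_{n,m>k} (f_n - f_m)`, if `(g_k)` `λ`-converges to `0` then
`liminf_n f_n = limsup_n f_n` `λ`-a.s. -/
theorem stmt_18 {Ω : Type*} {𝒜 : SetAlg Ω} (lam : BAMeasure 𝒜)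
    (fs : ℕ → Ω → ℝ) (hfs : ∀ n, fs n ∈ L0 lam)
    (g : ℕ → Ω → EReal)
    (hg : ∀ k ω, g k ω = ⨅ (n : ℕ) (m : ℕ) (_ : k < n) (_ : k < m),
      ((fs n ω - fs m ω : ℝ) : EReal))
    (hconv : ∀ c > (0:ℝ), Tendsto
      (fun k => outer lam {ω | ((c : ℝ) : EReal) < max (g k ω) (-(g k ω))})
      atTop (𝓝 0)) :
    ∀ c > (0:ℝ), outer lam
      {ω | Filter.liminf (fun n => ((fs n ω : ℝ) : EReal)) atTop + ((c : ℝ) : EReal)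
        < Filter.limsup (fun n => ((fs n ω : ℝ) : EReal)) atTop} = 0 := by
  intro c hc
  refine le_antisymm ?_ (outer_nonneg_aux _ _)
  refine ge_of_tendsto' (hconv (c/2) (by positivity)) fun k => outer_mono_aux lam ?_
  intro ω hω
  simp only [Set.mem_setOf_eq] at hω ⊢
  by_contra hcon
  rw [not_lt] at hcon
  have h1 : -(g k ω) ≤ ((c/2 : ℝ) : EReal) := (le_max_right _ _).trans hcon
  have h2 : ((-(c/2) : ℝ) : EReal) ≤ g k ω := by
    rw [EReal.coe_neg]; exact EReal.neg_le_of_neg_le h1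
  have key : ∀ n m : ℕ, k < n → k < m → -(c/2) ≤ fs n ω - fs m ω := by
    intro n m hn hm
    rw [hg] at h2
    have := h2.trans (iInf_le_of_le n (iInf_le_of_le m (iInf_le_of_le hn (iInf_le _ hm))))
    exact_mod_cast this
  have hev : ∀ᶠ n : ℕ in atTop, k < n := eventually_gt_atTop k
  have hsup : limsup (fun n => ((fs n ω : ℝ) : EReal)) atTop
      ≤ ((fs (k+1) ω + c/2 : ℝ) : EReal) := by
    refine limsup_le_of_le (by isBoundedDefault) (hev.mono fun n hn => ?_)
    have := key (k+1) n (by omega) hn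
    exact EReal.coe_le_coe_iff.2 (by linarith)
  have hinf : ((fs (k+1) ω - c/2 : ℝ) : EReal)
      ≤ liminf (fun n => ((fs n ω : ℝ) : EReal)) atTop := by
    refine le_liminf_of_le (by isBoundedDefault) (hev.mono fun n hn => ?_)
    have := key n (k+1) hn (by omega)
    exact EReal.coe_le_coe_iff.2 (by linarith)
  refine absurd hω (not_lt.2 (hsup.trans ?_))
  calc ((fs (k+1) ω + c/2 : ℝ) : EReal) = ((fs (k+1) ω - c/2 : ℝ) : EReal) + (c : EReal) := by
        rw [← EReal.coe_add]; congr 1; ring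
    _ ≤ _ := by gcongr

end FA
end
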